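/- arXiv:2411.05716 — 13 statements merged into one kernel-verified Lean document; each statement's English description precedes it below -/
import Mathlib

section
/- Let S be a left-symmetric dialgebra over a field K and let ρ, τ, σ ∈ K. If d₁ and d₂ are both (ρ,τ,σ)-derivations of S, then the commutator [d₁,d₂] = d₁ ∘ d₂ − d₂ ∘ d₁ is a (ρ²,τ²,σ²)-derivation of S. -/
noncomputable section

/-- `d` is a `(ρ,τ,σ)`-derivation of the algebra `(S, la, ra)`, where `la` is the
left product `⊣` and `ra` is the right product `⊢`. -/
def IsDer {K : Type*} [CommRing K] {S : Type*} [AddCommGroup S] [Module K S]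
    (la ra : S →ₗ[K] S →ₗ[K] S) (ρ τ σ : K) (d : S →ₗ[K] S) : Prop :=
  (∀ p q : S, ρ • d (la p q) = τ • la (d p) q + σ • la p (d q)) ∧
  (∀ p q : S, ρ • d (ra p q) = τ • ra (d p) q + σ • ra p (d q))

theorem commutator_aux {K : Type*} [Field K] {S : Type*} [AddCommGroup S] [Module K S]
    (m : S →ₗ[K] S →ₗ[K] S) (ρ τ σ : K) (d₁ d₂ : S →ₗ[K] S)
    (h₁ : ∀ p q : S, ρ • d₁ (m p q) = τ • m (d₁ p) q + σ • m p (d₁ q))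
    (h₂ : ∀ p q : S, ρ • d₂ (m p q) = τ • m (d₂ p) q + σ • m p (d₂ q)) (p q : S) :
    ρ ^ 2 • (d₁ ∘ₗ d₂ - d₂ ∘ₗ d₁) (m p q) =
      τ ^ 2 • m ((d₁ ∘ₗ d₂ - d₂ ∘ₗ d₁) p) q + σ ^ 2 • m p ((d₁ ∘ₗ d₂ - d₂ ∘ₗ d₁) q) := by
  have key : ∀ d e : S →ₗ[K] S,
      (∀ p q : S, ρ • d (m p q) = τ • m (d p) q + σ • m p (d q)) →
      (∀ p q : S, ρ • e (m p q) = τ • m (e p) q + σ • m p (e q)) →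
      ρ ^ 2 • d (e (m p q)) = τ • (τ • m (d (e p)) q + σ • m (e p) (d q))
        + σ • (τ • m (d p) (e q) + σ • m p (d (e q))) := by
    intro d e hd he
    rw [pow_two, mul_smul, ← map_smul d, he, map_add, map_smul, map_smul, smul_add,
      smul_comm ρ τ, smul_comm ρ σ, hd, hd]
  simp only [LinearMap.sub_apply, LinearMap.comp_apply, smul_sub, map_sub,
    key d₁ d₂ h₁ h₂, key d₂ d₁ h₂ h₁]
  module

theorem commutator_isDer {K : Type*} [Field K] {S : Type*} [AddCommGroup S] [Module K S]
    (la ra : S →ₗ[K] S →ₗ[K] S)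
    (hax1 : ∀ p q r : S, la p (la q r) = la p (ra q r))
    (hax2 : ∀ p q r : S, ra (ra p q) r = ra (la p q) r)
    (hax3 : ∀ p q r : S, la p (la q r) - la (la p q) r = ra q (la p r) - la (ra q p) r)
    (hax4 : ∀ p q r : S, ra p (ra q r) - ra (ra p q) r = ra q (ra p r) - ra (ra q p) r)
    (ρ τ σ : K) (d₁ d₂ : S →ₗ[K] S)
    (hd₁ : IsDer la ra ρ τ σ d₁) (hd₂ : IsDer la ra ρ τ σ d₂) :
    IsDer la ra (ρ ^ 2) (τ ^ 2) (σ ^ 2) (d₁ ∘ₗ d₂ - d₂ ∘ₗ d₁) := by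
  exact ⟨commutator_aux la ρ τ σ d₁ d₂ hd₁.1 hd₂.1, commutator_aux ra ρ τ σ d₁ d₂ hd₁.2 hd₂.2⟩
end
end

section
/- Let a, b ∈ ℂ with a ≠ 0 and b ≠ 0, and let L¹₂(a,b) be the left-symmetric dialgebra on ℂ² with basis e₁, e₂ and products e₁ ⊣ e₂ = e₁, e₂ ⊣ e₂ = e₂, e₂ ⊢ e₁ = a·e₁, e₂ ⊢ e₂ = b·e₁ + e₂ (all other basis products zero). Then a linear map d : ℂ² → ℂ² is a (1,1,1)-derivation of L¹₂(a,b) if and only if its matrix in the basis (e₁,e₂) has the form [[t·(a−1)/b, t],[0, 0]] for some t ∈ ℂ; in particular Der_{(1,1,1)}L¹₂(a,b) has dimension 1. -/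
noncomputable section

/-- The space `Der_{(ρ,τ,σ)} S` of `(ρ,τ,σ)`-derivations, as a submodule of `End S`. -/
def DerSub {K : Type*} [CommRing K] {S : Type*} [AddCommGroup S] [Module K S]
    (la ra : S →ₗ[K] S →ₗ[K] S) (ρ τ σ : K) : Submodule K (S →ₗ[K] S) where
  carrier := {d | IsDer la ra ρ τ σ d}
  zero_mem' := ⟨fun p q => by simp, fun p q => by simp⟩
  add_mem' := by
    rintro d₁ d₂ h₁ h₂
    refine ⟨fun p q => ?_, fun p q => ?_⟩
    · have a1 := h₁.1 p q; have a2 := h₂.1 p q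
      simp only [LinearMap.add_apply, map_add, smul_add]
      rw [a1, a2]; abel
    · have a1 := h₁.2 p q; have a2 := h₂.2 p q
      simp only [LinearMap.add_apply, map_add, smul_add]
      rw [a1, a2]; abel
  smul_mem' := by
    rintro c d h
    refine ⟨fun p q => ?_, fun p q => ?_⟩
    · simp only [LinearMap.smul_apply, map_smul]
      rw [smul_comm ρ c, h.1 p q, smul_add, smul_comm τ c, smul_comm σ c]
    · simp only [LinearMap.smul_apply, map_smul]
      rw [smul_comm ρ c, h.2 p q, smul_add, smul_comm τ c, smul_comm σ c]

/-- The left product `⊣` of the dialgebra, extended bilinearly from its values on the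
basis `e₁ = (1,0)`, `e₂ = (0,1)` of `ℂ²`. -/
def L1l (a b : ℂ) : (ℂ × ℂ) →ₗ[ℂ] (ℂ × ℂ) →ₗ[ℂ] (ℂ × ℂ) :=
  LinearMap.mk₂ ℂ (fun p q => (p.1 * q.2, p.2 * q.2))
    (by intros; ext <;> simp <;> ring)
    (by intros; ext <;> simp <;> ring)
    (by intros; ext <;> simp <;> ring)
    (by intros; ext <;> simp <;> ring)

/-- The right product `⊢` of the dialgebra, extended bilinearly from its values on the
basis `e₁ = (1,0)`, `e₂ = (0,1)` of `ℂ²`. -/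
def L1r (a b : ℂ) : (ℂ × ℂ) →ₗ[ℂ] (ℂ × ℂ) →ₗ[ℂ] (ℂ × ℂ) :=
  LinearMap.mk₂ ℂ (fun p q => (a * p.2 * q.1 + b * p.2 * q.2, p.2 * q.2))
    (by intros; ext <;> simp <;> ring)
    (by intros; ext <;> simp <;> ring)
    (by intros; ext <;> simp <;> ring)
    (by intros; ext <;> simp <;> ring)

theorem L1_der_one_one_one (a b : ℂ) (ha : a ≠ 0) (hb : b ≠ 0) :
    (∀ d : (ℂ × ℂ) →ₗ[ℂ] (ℂ × ℂ), IsDer (L1l a b) (L1r a b) 1 1 1 d ↔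
      ∃ t : ℂ, d ((1 : ℂ), (0 : ℂ)) = (t * (a - 1) / b, 0) ∧ d ((0 : ℂ), (1 : ℂ)) = (t, 0)) ∧
    Module.finrank ℂ (DerSub (L1l a b) (L1r a b) 1 1 1) = 1 := by
  have key : ∀ d : (ℂ × ℂ) →ₗ[ℂ] (ℂ × ℂ), IsDer (L1l a b) (L1r a b) 1 1 1 d ↔
      ∃ t : ℂ, d ((1 : ℂ), (0 : ℂ)) = (t * (a - 1) / b, 0) ∧
        d ((0 : ℂ), (1 : ℂ)) = (t, 0) := by
    intro d
    have hd : ∀ p : ℂ × ℂ, d p = p.1 • d (1, 0) + p.2 • d (0, 1) := by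
      intro p
      rw [← map_smul, ← map_smul, ← map_add]
      congr 1
      ext <;> simp
    constructor
    · rintro ⟨hl, hr⟩
      have h1 := hl (1, 0) (1, 0)
      have h2 := hl (0, 1) (0, 1)
      have h3 := hr (0, 1) (0, 1)
      rw [hd (L1l a b _ _)] at h1 h2
      rw [hd (L1r a b _ _)] at h3
      rcases hx : d (1, 0) with ⟨x, z⟩
      rcases hy : d (0, 1) with ⟨t, w⟩
      simp only [hx, hy] at h1 h2 h3
      simp [L1l] at h1
      simp [L1l] at h2
      simp [L1r] at h3
      have hz : z = 0 := (congrArg Prod.fst h1).symm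
      subst hz
      have hw : w = 0 := by tauto
      subst hw
      refine ⟨t, ?_, rfl⟩
      ext
      · simp at h3 ⊢
        rw [eq_div_iff hb]
        linear_combination h3
      · rfl
    · rintro ⟨t, h1, h2⟩
      rw [h1, h2] at hd
      constructor
      · intro p q
        rw [hd (L1l a b _ _), hd p, hd q]
        ext
        · simp [L1l]
          ring
        · simp [L1l]
      · intro p q
        rw [hd (L1r a b _ _), hd p, hd q]
        ext
        · simp [L1r]
          field_simp
          ring
        · simp [L1r]
  refine ⟨key, ?_⟩
  let d₀ : (ℂ × ℂ) →ₗ[ℂ] (ℂ × ℂ) :=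
    LinearMap.inl ℂ ℂ ℂ ∘ₗ (((a - 1) / b) • LinearMap.fst ℂ ℂ ℂ + LinearMap.snd ℂ ℂ ℂ)
  have e1 : d₀ (1, 0) = ((a - 1) / b, 0) := by simp [d₀]
  have e2 : d₀ (0, 1) = (1, 0) := by simp [d₀]
  have hspan : DerSub (L1l a b) (L1r a b) 1 1 1 = Submodule.span ℂ {d₀} := by
    ext d
    rw [Submodule.mem_span_singleton]
    change IsDer _ _ _ _ _ d ↔ _
    rw [key]
    constructor
    · rintro ⟨t, h1, h2⟩
      refine ⟨t, LinearMap.ext fun p => ?_⟩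
      have hp : p = p.1 • ((1 : ℂ), (0 : ℂ)) + p.2 • ((0 : ℂ), (1 : ℂ)) := by ext <;> simp
      rw [hp, map_add, map_add, map_smul, map_smul, map_smul, map_smul,
        LinearMap.smul_apply, LinearMap.smul_apply, h1, h2, e1, e2]
      ext <;> simp
      left
      ring
    · rintro ⟨t, rfl⟩
      refine ⟨t, ?_, ?_⟩
      · rw [LinearMap.smul_apply, e1]
        ext <;> simp
        ring
      · rw [LinearMap.smul_apply, e2]
        ext <;> simp
  rw [hspan]
  apply finrank_span_singleton
  intro h
  rw [h] at e2
  simpa using congrArg Prod.fst e2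
end
end

section
/- Let a, b ∈ ℂ with a ≠ 0, and let L¹₂(a,b) be the left-symmetric dialgebra on ℂ² with basis e₁, e₂ and products e₁ ⊣ e₂ = e₁, e₂ ⊣ e₂ = e₂, e₂ ⊢ e₁ = a·e₁, e₂ ⊢ e₂ = b·e₁ + e₂ (all other basis products zero). Then a linear map d : ℂ² → ℂ² is a (1,1,0)-derivation of L¹₂(a,b) if and only if d is a scalar multiple of the identity; in particular Der_{(1,1,0)}L¹₂(a,b) has dimension 1. -/
noncomputable section

theorem L1_der_one_one_zero (a b : ℂ) (ha : a ≠ 0) :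
    (∀ d : (ℂ × ℂ) →ₗ[ℂ] (ℂ × ℂ), IsDer (L1l a b) (L1r a b) 1 1 0 d ↔
      ∃ c : ℂ, d = c • (LinearMap.id : (ℂ × ℂ) →ₗ[ℂ] (ℂ × ℂ))) ∧
    Module.finrank ℂ (DerSub (L1l a b) (L1r a b) 1 1 0) = 1 := by
  have key : ∀ d : (ℂ × ℂ) →ₗ[ℂ] (ℂ × ℂ), IsDer (L1l a b) (L1r a b) 1 1 0 d ↔
      ∃ c : ℂ, d = c • (LinearMap.id : (ℂ × ℂ) →ₗ[ℂ] (ℂ × ℂ)) := by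
    intro d
    constructor
    · rintro ⟨-, h⟩
      have h1 := h (0, 1) (1, 0)
      have h2 := h (0, 1) (0, 1)
      simp only [L1r, LinearMap.mk₂_apply, one_smul, zero_smul, add_zero, mul_one, mul_zero,
        zero_add] at h1 h2
      have e1 : ((a, 0) : ℂ × ℂ) = a • (1, 0) := by simp
      have e2 : ((b, 1) : ℂ × ℂ) = b • (1, 0) + (0, 1) := by simp
      rw [e1, map_smul] at h1
      rw [e2, map_add, map_smul] at h2
      have h11 := congrArg Prod.fst h1
      have h12 := congrArg Prod.snd h1
      have h21 := congrArg Prod.fst h2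
      simp only [Prod.smul_fst, Prod.smul_snd, Prod.fst_add, smul_eq_mul] at h11 h12 h21
      have k1 : (d (1, 0)).1 = (d (0, 1)).2 := mul_left_cancel₀ ha h11
      have k2 : (d (1, 0)).2 = 0 := by simpa [ha] using h12
      have k3 : (d (0, 1)).1 = 0 := by rw [k1] at h21; linear_combination h21
      refine ⟨(d (0, 1)).2, ?_⟩
      ext <;> simp [k1, k2, k3]
    · rintro ⟨c, rfl⟩
      exact ⟨fun p q => by simp, fun p q => by simp⟩
  refine ⟨key, ?_⟩
  have hs : DerSub (L1l a b) (L1r a b) 1 1 0 =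
      Submodule.span ℂ {(LinearMap.id : (ℂ × ℂ) →ₗ[ℂ] (ℂ × ℂ))} := by
    ext d
    rw [Submodule.mem_span_singleton]
    refine (key d).trans ⟨?_, ?_⟩ <;> rintro ⟨c, hc⟩ <;> exact ⟨c, hc.symm⟩
  rw [hs]
  apply finrank_span_singleton
  intro h
  have := congrArg Prod.fst (LinearMap.congr_fun h (1, 0))
  simp at this
end
end

section
/- Let a, b ∈ ℂ with a ≠ 0, and let L¹₂(a,b) be the left-symmetric dialgebra on ℂ² with basis e₁, e₂ and products e₁ ⊣ e₂ = e₁, e₂ ⊣ e₂ = e₂, e₂ ⊢ e₁ = a·e₁, e₂ ⊢ e₂ = b·e₁ + e₂ (all other basis products zero). Then the only (0,1,1)-derivation of L¹₂(a,b) is the zero map, i.e., Der_{(0,1,1)}L¹₂(a,b) = {0}. -/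
noncomputable section

theorem L1_der_zero_one_one (a b : ℂ) (ha : a ≠ 0) :
    (∀ d : (ℂ × ℂ) →ₗ[ℂ] (ℂ × ℂ), IsDer (L1l a b) (L1r a b) 0 1 1 d ↔
      d = 0) := by
  intro d
  constructor
  · rintro ⟨h, -⟩
    have h2 := h (0, 1) (0, 1)
    have h1 := h (1, 0) (0, 1)
    simp only [L1l, LinearMap.mk₂_apply, Prod.ext_iff] at h1 h2
    simp at h1 h2
    obtain ⟨h21, h22⟩ := h2
    obtain ⟨h11, h12⟩ := h1
    have hw : (d (0, 1)).2 = 0 := by linear_combination (-1 / 2 : ℂ) * h22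
    have e2 : d (0, 1) = 0 := by
      ext1
      · exact h21.symm
      · simpa using hw
    have e1 : d (1, 0) = 0 := by
      ext1
      · simpa [hw] using h11.symm
      · exact h12.symm
    apply LinearMap.ext
    rintro ⟨x, y⟩
    have hxy : ((x, y) : ℂ × ℂ) = x • (1, 0) + y • (0, 1) := by simp
    rw [hxy, map_add, map_smul, map_smul, e1, e2]
    simp
  · rintro rfl
    constructor <;> intro p q <;> simp
end
end

section
/- Let b, c ∈ ℂ with c ≠ 0, and let L²₂(b,c) be the left-symmetric dialgebra on ℂ² with basis e₁, e₂ and products e₁ ⊣ e₂ = e₁, e₂ ⊣ e₂ = c·e₁ + e₂, e₂ ⊢ e₂ = b·e₁ + e₂ (all other basis products zero). Then the only (1,1,1)-derivation of L²₂(b,c) is the zero map, i.e., Der_{(1,1,1)}L²₂(b,c) = {0}. -/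
noncomputable section

/-- The left product `⊣` of the dialgebra, extended bilinearly from its values on the
basis `e₁ = (1,0)`, `e₂ = (0,1)` of `ℂ²`. -/
def L2l (b c : ℂ) : (ℂ × ℂ) →ₗ[ℂ] (ℂ × ℂ) →ₗ[ℂ] (ℂ × ℂ) :=
  LinearMap.mk₂ ℂ (fun p q => (p.1 * q.2 + c * p.2 * q.2, p.2 * q.2))
    (by intros; ext <;> simp <;> ring)
    (by intros; ext <;> simp <;> ring)
    (by intros; ext <;> simp <;> ring)
    (by intros; ext <;> simp <;> ring)

/-- The right product `⊢` of the dialgebra, extended bilinearly from its values on the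
basis `e₁ = (1,0)`, `e₂ = (0,1)` of `ℂ²`. -/
def L2r (b c : ℂ) : (ℂ × ℂ) →ₗ[ℂ] (ℂ × ℂ) →ₗ[ℂ] (ℂ × ℂ) :=
  LinearMap.mk₂ ℂ (fun p q => (b * p.2 * q.2, p.2 * q.2))
    (by intros; ext <;> simp <;> ring)
    (by intros; ext <;> simp <;> ring)
    (by intros; ext <;> simp <;> ring)
    (by intros; ext <;> simp <;> ring)

theorem L2_der_one_one_one (b c : ℂ) (hc : c ≠ 0) :
    (∀ d : (ℂ × ℂ) →ₗ[ℂ] (ℂ × ℂ), IsDer (L2l b c) (L2r b c) 1 1 1 d ↔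
      d = 0) := by
  intro d
  constructor
  · rintro ⟨hl, hr⟩
    have dec : ∀ u v : ℂ, d (u, v) = u • d (1, 0) + v • d (0, 1) := by
      intro u v
      rw [← map_smul, ← map_smul, ← map_add]
      simp
    obtain ⟨⟨x, y⟩, h1⟩ : ∃ p, d (1, 0) = p := ⟨_, rfl⟩
    obtain ⟨⟨z, w⟩, h2⟩ : ∃ p, d (0, 1) = p := ⟨_, rfl⟩
    rw [h1, h2] at dec
    have a1 := hl (1, 0) (1, 0)
    have a2 := hl (1, 0) (0, 1)
    have a3 := hl (0, 1) (0, 1)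
    have a4 := hr (0, 1) (0, 1)
    simp only [L2l, L2r, LinearMap.mk₂_apply, dec, Prod.ext_iff, one_smul, Prod.fst_add,
      Prod.snd_add, Prod.smul_fst, Prod.smul_snd, smul_eq_mul] at a1 a2 a3 a4
    have hy : y = 0 := by linear_combination -a1.1
    have hw : w = 0 := by linear_combination -a2.1 - c * hy
    have hx : x = 0 := by
      have : c * x = 0 := by linear_combination a3.1 + 2 * c * hw
      exact (mul_eq_zero.mp this).resolve_left hc
    have hz : z = 0 := by linear_combination a4.1 - b * hx + 2 * b * hw
    subst hy hw hx hz
    apply LinearMap.ext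
    rintro ⟨u, v⟩
    rw [dec]
    simp
  · rintro rfl
    constructor <;> intro p q <;> simp
end
end

section
/- Let b, c ∈ ℂ with c ≠ 0, and let L²₂(b,c) be the left-symmetric dialgebra on ℂ² with basis e₁, e₂ and products e₁ ⊣ e₂ = e₁, e₂ ⊣ e₂ = c·e₁ + e₂, e₂ ⊢ e₂ = b·e₁ + e₂ (all other basis products zero). Then a linear map d : ℂ² → ℂ² is a (0,0,1)-derivation of L²₂(b,c) if and only if its matrix in the basis (e₁,e₂) has the form [[d₁₁, d₁₂],[0, 0]] for some d₁₁, d₁₂ ∈ ℂ; in particular Der_{(0,0,1)}L²₂(b,c) has dimension 2. -/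
noncomputable section

theorem L2_isDer_iff_aux (b c : ℂ) (d : (ℂ × ℂ) →ₗ[ℂ] (ℂ × ℂ)) :
    IsDer (L2l b c) (L2r b c) 0 0 1 d ↔
      ∃ d₁₁ d₁₂ : ℂ, d ((1 : ℂ), (0 : ℂ)) = (d₁₁, 0) ∧ d ((0 : ℂ), (1 : ℂ)) = (d₁₂, 0) := by
  constructor
  · rintro ⟨-, h⟩
    have h1 := congrArg Prod.snd (h (0, 1) (1, 0))
    have h2 := congrArg Prod.snd (h (0, 1) (0, 1))
    simp [L2r] at h1 h2
    exact ⟨(d (1, 0)).1, (d (0, 1)).1, Prod.ext rfl h1.symm, Prod.ext rfl h2.symm⟩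
  · rintro ⟨x, y, hx, hy⟩
    have key : ∀ q : ℂ × ℂ, (d q).2 = 0 := by
      rintro ⟨u, v⟩
      have e : ((u, v) : ℂ × ℂ) = u • ((1 : ℂ), (0 : ℂ)) + v • ((0 : ℂ), (1 : ℂ)) := by
        ext <;> simp
      rw [e, map_add, map_smul, map_smul, hx, hy]
      simp
    refine ⟨fun p q => ?_, fun p q => ?_⟩
    · ext <;> simp [L2l, key]
    · ext <;> simp [L2r, key]

theorem L2_der_zero_zero_one (b c : ℂ) (hc : c ≠ 0) :
    (∀ d : (ℂ × ℂ) →ₗ[ℂ] (ℂ × ℂ), IsDer (L2l b c) (L2r b c) 0 0 1 d ↔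
      ∃ d₁₁ d₁₂ : ℂ, d ((1 : ℂ), (0 : ℂ)) = (d₁₁, 0) ∧ d ((0 : ℂ), (1 : ℂ)) = (d₁₂, 0)) ∧
    Module.finrank ℂ (DerSub (L2l b c) (L2r b c) 0 0 1) = 2 := by
  refine ⟨L2_isDer_iff_aux b c, ?_⟩
  let f : DerSub (L2l b c) (L2r b c) 0 0 1 →ₗ[ℂ] ℂ × ℂ :=
    { toFun := fun d => ((d.1 (1, 0)).1, (d.1 (0, 1)).1)
      map_add' := fun _ _ => rfl
      map_smul' := fun _ _ => rfl }
  have hf : Function.Bijective f := by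
    constructor
    · rintro ⟨d, hd⟩ ⟨d', hd'⟩ h
      obtain ⟨x, y, hx, hy⟩ := (L2_isDer_iff_aux b c d).1 hd
      obtain ⟨x', y', hx', hy'⟩ := (L2_isDer_iff_aux b c d').1 hd'
      have h1 : (d (1, 0)).1 = (d' (1, 0)).1 := (Prod.ext_iff.1 h).1
      have h2 : (d (0, 1)).1 = (d' (0, 1)).1 := (Prod.ext_iff.1 h).2
      rw [hx, hx'] at h1
      rw [hy, hy'] at h2
      simp only at h1 h2
      apply Subtype.ext
      ext <;> simp [hx, hx', hy, hy', h1, h2]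
    · rintro ⟨x, y⟩
      let g : (ℂ × ℂ) →ₗ[ℂ] (ℂ × ℂ) :=
        (LinearMap.inl ℂ ℂ ℂ).comp
          (x • LinearMap.fst ℂ ℂ ℂ + y • LinearMap.snd ℂ ℂ ℂ)
      refine ⟨⟨g, (L2_isDer_iff_aux b c g).2 ⟨x, y, ?_, ?_⟩⟩, ?_⟩
      · simp [g]
      · simp [g]
      · simp [f, g]
  rw [(LinearEquiv.ofBijective f hf).finrank_eq]
  simp
end
end

section
/- Let b ∈ ℂ and let L³₂(b) be the left-symmetric dialgebra on ℂ² with basis e₁, e₂ and products e₁ ⊣ e₂ = e₁, e₂ ⊣ e₂ = e₂, e₂ ⊢ e₂ = b·e₁ + e₂ (all other basis products zero). Then a linear map d : ℂ² → ℂ² is a (1,1,1)-derivation of L³₂(b) if and only if its matrix in the basis (e₁,e₂) has the form [[t, −b·t],[0, 0]] for some t ∈ ℂ; in particular Der_{(1,1,1)}L³₂(b) has dimension 1. -/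
noncomputable section

/-- The left product `⊣` of the dialgebra, extended bilinearly from its values on the
basis `e₁ = (1,0)`, `e₂ = (0,1)` of `ℂ²`. -/
def L3l (b : ℂ) : (ℂ × ℂ) →ₗ[ℂ] (ℂ × ℂ) →ₗ[ℂ] (ℂ × ℂ) :=
  LinearMap.mk₂ ℂ (fun p q => (p.1 * q.2, p.2 * q.2))
    (by intros; ext <;> simp <;> ring)
    (by intros; ext <;> simp <;> ring)
    (by intros; ext <;> simp <;> ring)
    (by intros; ext <;> simp <;> ring)

/-- The right product `⊢` of the dialgebra, extended bilinearly from its values on the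
basis `e₁ = (1,0)`, `e₂ = (0,1)` of `ℂ²`. -/
def L3r (b : ℂ) : (ℂ × ℂ) →ₗ[ℂ] (ℂ × ℂ) →ₗ[ℂ] (ℂ × ℂ) :=
  LinearMap.mk₂ ℂ (fun p q => (b * p.2 * q.2, p.2 * q.2))
    (by intros; ext <;> simp <;> ring)
    (by intros; ext <;> simp <;> ring)
    (by intros; ext <;> simp <;> ring)
    (by intros; ext <;> simp <;> ring)

theorem L3_der_one_one_one (b : ℂ) :
    (∀ d : (ℂ × ℂ) →ₗ[ℂ] (ℂ × ℂ), IsDer (L3l b) (L3r b) 1 1 1 d ↔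
      ∃ t : ℂ, d ((1 : ℂ), (0 : ℂ)) = (t, 0) ∧ d ((0 : ℂ), (1 : ℂ)) = (-b * t, 0)) ∧
    Module.finrank ℂ (DerSub (L3l b) (L3r b) 1 1 1) = 1 := by
  have key : ∀ d : (ℂ × ℂ) →ₗ[ℂ] (ℂ × ℂ), IsDer (L3l b) (L3r b) 1 1 1 d ↔
      ∃ t : ℂ, d ((1 : ℂ), (0 : ℂ)) = (t, 0) ∧ d ((0 : ℂ), (1 : ℂ)) = (-b * t, 0) := by
    intro d
    have hd : ∀ x y : ℂ, d (x, y) = x • d (1, 0) + y • d (0, 1) := by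
      intro x y
      rw [← map_smul, ← map_smul, ← map_add]
      simp
    constructor
    · rintro ⟨h1, h2⟩
      have a1 := h1 (0, 1) (0, 1)
      have a2 := h1 (1, 0) (1, 0)
      have a3 := h2 (0, 1) (0, 1)
      simp only [L3l, L3r, LinearMap.mk₂_apply, one_smul, mul_one, mul_zero, one_mul,
        zero_mul] at a1 a2 a3
      rw [hd b 1] at a3
      rcases hp : d (1, 0) with ⟨a, c⟩
      rcases hq : d (0, 1) with ⟨u, v⟩
      rw [hp, hq] at a3
      rw [hq] at a1
      rw [hp, hd 0 0] at a2
      simp [Prod.ext_iff] at a1 a2 a3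
      refine ⟨a, ?_, ?_⟩
      · simp [a2]
      · obtain ⟨a3, -⟩ := a3
        subst a1
        simp only [Prod.mk.injEq, and_true]
        linear_combination a3
    · rintro ⟨t, h1, h2⟩
      constructor
      · rintro ⟨p1, p2⟩ ⟨q1, q2⟩
        simp only [L3l, LinearMap.mk₂_apply, one_smul]
        rw [hd p1 p2, hd q1 q2, hd (p1 * q2), h1, h2]
        ext <;> simp <;> ring
      · rintro ⟨p1, p2⟩ ⟨q1, q2⟩
        simp only [L3r, LinearMap.mk₂_apply, one_smul]
        rw [hd p1 p2, hd q1 q2, hd (b * p2 * q2), h1, h2]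
        ext <;> simp <;> ring
  refine ⟨key, ?_⟩
  let d₀ : (ℂ × ℂ) →ₗ[ℂ] (ℂ × ℂ) :=
    LinearMap.inl ℂ ℂ ℂ ∘ₗ (LinearMap.fst ℂ ℂ ℂ - b • LinearMap.snd ℂ ℂ ℂ)
  have h0 : IsDer (L3l b) (L3r b) 1 1 1 d₀ := (key d₀).2 ⟨1, by simp [d₀], by simp [d₀]⟩
  refine finrank_eq_one (⟨d₀, h0⟩ : DerSub (L3l b) (L3r b) 1 1 1) ?_ ?_
  · intro h
    have h' : d₀ = 0 := congrArg Subtype.val h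
    have h'' := congrArg Prod.fst (LinearMap.congr_fun h' (1, 0))
    simp [d₀] at h''
  · rintro ⟨d, hder⟩
    obtain ⟨t, h1, h2⟩ := (key d).1 hder
    refine ⟨t, Subtype.ext ?_⟩
    change t • d₀ = d
    apply LinearMap.ext
    rintro ⟨x, y⟩
    have hd : d (x, y) = x • d (1, 0) + y • d (0, 1) := by
      rw [← map_smul, ← map_smul, ← map_add]
      simp
    rw [hd, h1, h2]
    ext
    · simp [d₀]
      ring
    · simp [d₀]
end
end

section
/- Let b ∈ ℂ and let L³₂(b) be the left-symmetric dialgebra on ℂ² with basis e₁, e₂ and products e₁ ⊣ e₂ = e₁, e₂ ⊣ e₂ = e₂, e₂ ⊢ e₂ = b·e₁ + e₂ (all other basis products zero). Then a linear map d : ℂ² → ℂ² is a (1,1,0)-derivation of L³₂(b) if and only if its matrix in the basis (e₁,e₂) has the form [[d₁₁, −b·d₁₁ + b·d₂₂],[0, d₂₂]] for some d₁₁, d₂₂ ∈ ℂ; in particular Der_{(1,1,0)}L³₂(b) has dimension 2. -/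
noncomputable section

theorem L3_expand (d : (ℂ × ℂ) →ₗ[ℂ] (ℂ × ℂ)) (p : ℂ × ℂ) :
    d p = p.1 • d (1, 0) + p.2 • d (0, 1) := by
  rw [← map_smul, ← map_smul, ← map_add]
  simp

theorem L3_aux (b : ℂ) (d : (ℂ × ℂ) →ₗ[ℂ] (ℂ × ℂ)) : IsDer (L3l b) (L3r b) 1 1 0 d ↔
      ∃ d₁₁ d₂₂ : ℂ, d ((1 : ℂ), (0 : ℂ)) = (d₁₁, 0) ∧
        d ((0 : ℂ), (1 : ℂ)) = (-b * d₁₁ + b * d₂₂, d₂₂) := by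
  constructor
  · rintro ⟨_, h⟩
    have h1 := h (1, 0) (0, 1)
    have h2 := h (0, 1) (0, 1)
    simp only [L3r, LinearMap.mk₂_apply, one_smul, zero_smul, add_zero] at h1 h2
    rw [L3_expand d (_, _)] at h1
    rw [L3_expand d (b * _ * _, _)] at h2
    have h1' := congrArg Prod.snd h1
    have h2' := congrArg Prod.fst h2
    simp at h1' h2'
    refine ⟨(d (1, 0)).1, (d (0, 1)).2, ?_, ?_⟩
    · ext
      · rfl
      · simp only
        linear_combination -h1'
    · ext
      · simp only
        linear_combination h2'
      · rfl
  · rintro ⟨x, y, h1, h2⟩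
    constructor
    · intro p q
      rw [L3_expand d (L3l b p q), L3_expand d p, h1, h2]
      ext <;> simp [L3l] <;> ring
    · intro p q
      rw [L3_expand d (L3r b p q), L3_expand d p, h1, h2]
      ext <;> simp [L3r] <;> ring

theorem L3_der_one_one_zero (b : ℂ) :
    (∀ d : (ℂ × ℂ) →ₗ[ℂ] (ℂ × ℂ), IsDer (L3l b) (L3r b) 1 1 0 d ↔
      ∃ d₁₁ d₂₂ : ℂ, d ((1 : ℂ), (0 : ℂ)) = (d₁₁, 0) ∧ d ((0 : ℂ), (1 : ℂ)) = (-b * d₁₁ + b * d₂₂, d₂₂)) ∧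
    Module.finrank ℂ (DerSub (L3l b) (L3r b) 1 1 0) = 2 := by
  refine ⟨L3_aux b, ?_⟩
  let f : (DerSub (L3l b) (L3r b) 1 1 0) →ₗ[ℂ] (ℂ × ℂ) :=
    { toFun := fun d => ((d.1 (1, 0)).1, (d.1 (0, 1)).2)
      map_add' := fun _ _ => rfl
      map_smul' := fun _ _ => rfl }
  have hf : Function.Bijective f := by
    constructor
    · rintro ⟨d, hd⟩ ⟨d', hd'⟩ h
      obtain ⟨x, y, h1, h2⟩ := (L3_aux b d).1 hd
      obtain ⟨x', y', h1', h2'⟩ := (L3_aux b d').1 hd'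
      have h3 : ((d (1, 0)).1, (d (0, 1)).2) = ((d' (1, 0)).1, (d' (0, 1)).2) := h
      rw [h1, h2, h1', h2'] at h3
      simp only [Prod.mk.injEq] at h3
      obtain ⟨rfl, rfl⟩ := h3
      apply Subtype.ext
      apply LinearMap.ext
      intro p
      change d p = d' p
      rw [L3_expand d, L3_expand d', h1, h2, h1', h2']
    · rintro ⟨x, y⟩
      let d : (ℂ × ℂ) →ₗ[ℂ] (ℂ × ℂ) :=
        { toFun := fun p => (p.1 * x + p.2 * (-b * x + b * y), p.2 * y)
          map_add' := by intros; ext <;> simp <;> ring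
          map_smul' := by intros; ext <;> simp <;> ring }
      refine ⟨⟨d, (L3_aux b d).2 ⟨x, y, ?_, ?_⟩⟩, ?_⟩
      · simp [d]
      · simp [d]
      · simp [f, d]
  rw [(LinearEquiv.ofBijective f hf).finrank_eq]
  simp
end
end

section
/- Let b ∈ ℂ and let L³₂(b) be the left-symmetric dialgebra on ℂ² with basis e₁, e₂ and products e₁ ⊣ e₂ = e₁, e₂ ⊣ e₂ = e₂, e₂ ⊢ e₂ = b·e₁ + e₂ (all other basis products zero). Then a linear map d : ℂ² → ℂ² is a (0,0,1)-derivation of L³₂(b) if and only if its matrix in the basis (e₁,e₂) has the form [[d₁₁, d₁₂],[0, 0]] for some d₁₁, d₁₂ ∈ ℂ; in particular Der_{(0,0,1)}L³₂(b) has dimension 2. -/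
noncomputable section

theorem isDer_iff_aux (b : ℂ) (d : (ℂ × ℂ) →ₗ[ℂ] (ℂ × ℂ)) :
    IsDer (L3l b) (L3r b) 0 0 1 d ↔ ∀ q, (d q).2 = 0 := by
  constructor
  · intro h q
    have := congrArg Prod.snd (h.1 (0, 1) q)
    simpa [L3l] using this.symm
  · intro h
    refine ⟨fun p q => ?_, fun p q => ?_⟩
    · simp [L3l, h q]; rfl
    · simp [L3r, h q]; rfl

/-- Derivations correspond to linear functionals (the first coordinate). -/
def derEquivAux (b : ℂ) : DerSub (L3l b) (L3r b) 0 0 1 ≃ₗ[ℂ] ((ℂ × ℂ) →ₗ[ℂ] ℂ) where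
  toFun d := (LinearMap.fst ℂ ℂ ℂ).comp d.1
  invFun f := ⟨(LinearMap.inl ℂ ℂ ℂ).comp f, (isDer_iff_aux b _).2 (fun q => by simp)⟩
  map_add' x y := by rw [Submodule.coe_add, LinearMap.comp_add]
  map_smul' c x := by rw [Submodule.coe_smul, LinearMap.comp_smul]; rfl
  left_inv d := by
    apply Subtype.ext
    refine LinearMap.ext fun q => ?_
    have h := (isDer_iff_aux b d.1).1 d.2 q
    exact Prod.ext rfl h.symm
  right_inv f := by
    refine LinearMap.ext fun q => ?_
    rfl

theorem L3_der_zero_zero_one (b : ℂ) :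
    (∀ d : (ℂ × ℂ) →ₗ[ℂ] (ℂ × ℂ), IsDer (L3l b) (L3r b) 0 0 1 d ↔
      ∃ d₁₁ d₁₂ : ℂ, d ((1 : ℂ), (0 : ℂ)) = (d₁₁, 0) ∧ d ((0 : ℂ), (1 : ℂ)) = (d₁₂, 0)) ∧
    Module.finrank ℂ (DerSub (L3l b) (L3r b) 0 0 1) = 2 := by
  refine ⟨fun d => ?_, ?_⟩
  · rw [isDer_iff_aux]
    constructor
    · intro h
      exact ⟨(d (1, 0)).1, (d (0, 1)).1, Prod.ext rfl (h _), Prod.ext rfl (h _)⟩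
    · rintro ⟨x, y, h1, h2⟩ ⟨u, v⟩
      have e : ((u, v) : ℂ × ℂ) = u • ((1 : ℂ), (0 : ℂ)) + v • ((0 : ℂ), (1 : ℂ)) := by simp
      rw [e, map_add, map_smul, map_smul, h1, h2]
      simp
  · rw [(derEquivAux b).finrank_eq, Module.finrank_linearMap]
    simp
end
end

section
/- Let c ∈ ℂ and let L⁴₂(c) be the left-symmetric dialgebra on ℂ² with basis e₁, e₂ and products e₂ ⊣ e₂ = c·e₁ + e₂, e₂ ⊢ e₁ = e₁, e₂ ⊢ e₂ = e₂ (all other basis products zero). Then a linear map d : ℂ² → ℂ² is a (1,1,1)-derivation of L⁴₂(c) if and only if its matrix in the basis (e₁,e₂) has the form [[t, −c·t],[0, 0]] for some t ∈ ℂ; in particular Der_{(1,1,1)}L⁴₂(c) has dimension 1. -/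
noncomputable section

/-- The left product `⊣` of the dialgebra, extended bilinearly from its values on the
basis `e₁ = (1,0)`, `e₂ = (0,1)` of `ℂ²`. -/
def L4l (c : ℂ) : (ℂ × ℂ) →ₗ[ℂ] (ℂ × ℂ) →ₗ[ℂ] (ℂ × ℂ) :=
  LinearMap.mk₂ ℂ (fun p q => (c * p.2 * q.2, p.2 * q.2))
    (by intros; ext <;> simp <;> ring)
    (by intros; ext <;> simp <;> ring)
    (by intros; ext <;> simp <;> ring)
    (by intros; ext <;> simp <;> ring)

/-- The right product `⊢` of the dialgebra, extended bilinearly from its values on the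
basis `e₁ = (1,0)`, `e₂ = (0,1)` of `ℂ²`. -/
def L4r (c : ℂ) : (ℂ × ℂ) →ₗ[ℂ] (ℂ × ℂ) →ₗ[ℂ] (ℂ × ℂ) :=
  LinearMap.mk₂ ℂ (fun p q => (p.2 * q.1, p.2 * q.2))
    (by intros; ext <;> simp <;> ring)
    (by intros; ext <;> simp <;> ring)
    (by intros; ext <;> simp <;> ring)
    (by intros; ext <;> simp <;> ring)

theorem L4_der_char (c : ℂ) (d : (ℂ × ℂ) →ₗ[ℂ] (ℂ × ℂ)) : IsDer (L4l c) (L4r c) 1 1 1 d ↔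
      ∃ t : ℂ, d ((1 : ℂ), (0 : ℂ)) = (t, 0) ∧ d ((0 : ℂ), (1 : ℂ)) = (-c * t, 0) := by
  have key : ∀ x y : ℂ, d (x, y) = x • d ((1 : ℂ), (0 : ℂ)) + y • d ((0 : ℂ), (1 : ℂ)) := by
    intro x y
    rw [← map_smul, ← map_smul, ← map_add]
    simp
  constructor
  · rintro ⟨h, -⟩
    have h12 := h (1, 0) (0, 1)
    have h22 := h (0, 1) (0, 1)
    simp only [L4l, LinearMap.mk₂_apply] at h12 h22
    rw [key (c * _ * _)] at h22
    rcases hd1 : d ((1 : ℂ), (0 : ℂ)) with ⟨a, b⟩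
    rcases hd2 : d ((0 : ℂ), (1 : ℂ)) with ⟨x, y⟩
    rw [hd1, hd2] at h12 h22
    simp [Prod.ext_iff] at h12 h22
    obtain ⟨h1, h2⟩ := h22
    have hz : d ((0 : ℂ), (0 : ℂ)) = 0 := map_zero d
    have hb : b = 0 := by rw [← h12.2, hz]; rfl
    subst hb
    have hy : y = 0 := by linear_combination -h2
    subst hy
    refine ⟨a, rfl, ?_⟩
    ext
    · simp only []
      linear_combination h1
    · rfl
  · rintro ⟨t, h1, h2⟩
    have key2 : ∀ x y : ℂ, d (x, y) = (x * t - y * c * t, 0) := by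
      intro x y
      rw [key, h1, h2]
      ext <;> simp
      ring
    refine ⟨?_, ?_⟩ <;> rintro ⟨p1, p2⟩ ⟨q1, q2⟩ <;>
      simp only [L4l, L4r, LinearMap.mk₂_apply, key2] <;> ext <;> simp <;> ring

theorem L4_der_one_one_one (c : ℂ) :
    (∀ d : (ℂ × ℂ) →ₗ[ℂ] (ℂ × ℂ), IsDer (L4l c) (L4r c) 1 1 1 d ↔
      ∃ t : ℂ, d ((1 : ℂ), (0 : ℂ)) = (t, 0) ∧ d ((0 : ℂ), (1 : ℂ)) = (-c * t, 0)) ∧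
    Module.finrank ℂ (DerSub (L4l c) (L4r c) 1 1 1) = 1 := by
  refine ⟨L4_der_char c, ?_⟩
  let D : (ℂ × ℂ) →ₗ[ℂ] (ℂ × ℂ) :=
    (LinearMap.fst ℂ ℂ ℂ - c • LinearMap.snd ℂ ℂ ℂ).prod 0
  have hD : D ∈ DerSub (L4l c) (L4r c) 1 1 1 :=
    (L4_der_char c D).2 ⟨1, by simp [D], by simp [D]⟩
  refine finrank_eq_one (⟨D, hD⟩ : DerSub (L4l c) (L4r c) 1 1 1) ?_ ?_
  · intro h
    have h1 : D = 0 := congrArg Subtype.val h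
    have h2 := LinearMap.congr_fun h1 (1, 0)
    simp [D] at h2
  · rintro ⟨d, hd⟩
    obtain ⟨t, h1, h2⟩ := (L4_der_char c d).1 hd
    refine ⟨t, Subtype.ext ?_⟩
    change t • D = d
    ext <;> simp [D, h1, h2, mul_comm]
end
end

section
/- Let c ∈ ℂ and let L⁴₂(c) be the left-symmetric dialgebra on ℂ² with basis e₁, e₂ and products e₂ ⊣ e₂ = c·e₁ + e₂, e₂ ⊢ e₁ = e₁, e₂ ⊢ e₂ = e₂ (all other basis products zero). Then a linear map d : ℂ² → ℂ² is a (1,0,1)-derivation of L⁴₂(c) if and only if its matrix in the basis (e₁,e₂) has the form [[d₁₁, −c·d₁₁ + c·d₂₂],[0, d₂₂]] for some d₁₁, d₂₂ ∈ ℂ; in particular Der_{(1,0,1)}L⁴₂(c) has dimension 2. -/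
noncomputable section

theorem lin_apply_aux (d : (ℂ × ℂ) →ₗ[ℂ] (ℂ × ℂ)) (p : ℂ × ℂ) :
    d p = p.1 • d ((1 : ℂ), (0 : ℂ)) + p.2 • d ((0 : ℂ), (1 : ℂ)) := by
  rw [← map_smul, ← map_smul, ← map_add]
  congr 1
  ext <;> simp

theorem der_iff_aux (c : ℂ) (d : (ℂ × ℂ) →ₗ[ℂ] (ℂ × ℂ)) : IsDer (L4l c) (L4r c) 1 0 1 d ↔
      ∃ d₁₁ d₂₂ : ℂ, d ((1 : ℂ), (0 : ℂ)) = (d₁₁, 0) ∧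
        d ((0 : ℂ), (1 : ℂ)) = (-c * d₁₁ + c * d₂₂, d₂₂) := by
  constructor
  · rintro ⟨h, -⟩
    have h1 := h (0, 1) (1, 0)
    have h2 := h (0, 1) (0, 1)
    simp only [L4l, LinearMap.mk₂_apply] at h1 h2
    rw [lin_apply_aux d] at h1
    rw [lin_apply_aux d (_, _)] at h2
    simp [Prod.ext_iff] at h1 h2
    refine ⟨(d (1, 0)).1, (d (0, 1)).2, Prod.ext rfl h1.2.symm, Prod.ext ?_ rfl⟩
    simp only
    linear_combination h2.1
  · rintro ⟨a, b, h1, h2⟩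
    have hd : ∀ p, d p = (p.1 * a + p.2 * (-c * a + c * b), p.2 * b) := by
      intro p
      rw [lin_apply_aux d p, h1, h2]
      ext <;> simp
    constructor <;> intro p q <;>
      simp only [L4l, L4r, LinearMap.mk₂_apply, hd] <;> ext <;> simp <;> ring

/-- The derivation with diagonal entries `x.1`, `x.2`. -/
def derMap (c : ℂ) (x : ℂ × ℂ) : (ℂ × ℂ) →ₗ[ℂ] (ℂ × ℂ) where
  toFun p := (p.1 * x.1 + p.2 * (-c * x.1 + c * x.2), p.2 * x.2)
  map_add' p q := by ext <;> simp <;> ring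
  map_smul' k p := by ext <;> simp <;> ring

/-- Coordinates on the space of derivations. -/
def derEquiv (c : ℂ) : DerSub (L4l c) (L4r c) 1 0 1 ≃ₗ[ℂ] (ℂ × ℂ) where
  toFun d := ((d.1 (1, 0)).1, (d.1 (0, 1)).2)
  map_add' d e := by simp
  map_smul' k d := by simp
  invFun x := ⟨derMap c x, (der_iff_aux c _).2 ⟨x.1, x.2, by simp [derMap], by simp [derMap]⟩⟩
  left_inv d := by
    obtain ⟨a, b, h1, h2⟩ := (der_iff_aux c d.1).1 d.2
    apply Subtype.ext
    apply LinearMap.ext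
    intro p
    rw [lin_apply_aux d.1 p, h1, h2]
    ext <;> simp [derMap, h1, h2]
  right_inv x := by simp [derMap]

theorem L4_der_one_zero_one (c : ℂ) :
    (∀ d : (ℂ × ℂ) →ₗ[ℂ] (ℂ × ℂ), IsDer (L4l c) (L4r c) 1 0 1 d ↔
      ∃ d₁₁ d₂₂ : ℂ, d ((1 : ℂ), (0 : ℂ)) = (d₁₁, 0) ∧ d ((0 : ℂ), (1 : ℂ)) = (-c * d₁₁ + c * d₂₂, d₂₂)) ∧
    Module.finrank ℂ (DerSub (L4l c) (L4r c) 1 0 1) = 2 := by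
  refine ⟨der_iff_aux c, ?_⟩
  rw [(derEquiv c).finrank_eq]
  simp
end
end

section
/- Let c ∈ ℂ and let L⁴₂(c) be the left-symmetric dialgebra on ℂ² with basis e₁, e₂ and products e₂ ⊣ e₂ = c·e₁ + e₂, e₂ ⊢ e₁ = e₁, e₂ ⊢ e₂ = e₂ (all other basis products zero). Then a linear map d : ℂ² → ℂ² is a (0,1,0)-derivation of L⁴₂(c) if and only if its matrix in the basis (e₁,e₂) has the form [[d₁₁, d₁₂],[0, 0]] for some d₁₁, d₁₂ ∈ ℂ; in particular Der_{(0,1,0)}L⁴₂(c) has dimension 2. -/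
noncomputable section

theorem L4_isDer_iff (c : ℂ) (d : (ℂ × ℂ) →ₗ[ℂ] (ℂ × ℂ)) :
    IsDer (L4l c) (L4r c) 0 1 0 d ↔ ∀ p, (d p).2 = 0 := by
  constructor
  · intro h p
    have h1 := congrArg Prod.snd (h.1 p (0, 1))
    simpa [L4l] using h1.symm
  · intro h
    refine ⟨fun p q => ?_, fun p q => ?_⟩
    · ext <;> simp [L4l, h p]
    · ext <;> simp [L4r, h p]

theorem L4_der_zero_one_zero (c : ℂ) :
    (∀ d : (ℂ × ℂ) →ₗ[ℂ] (ℂ × ℂ), IsDer (L4l c) (L4r c) 0 1 0 d ↔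
      ∃ d₁₁ d₁₂ : ℂ, d ((1 : ℂ), (0 : ℂ)) = (d₁₁, 0) ∧ d ((0 : ℂ), (1 : ℂ)) = (d₁₂, 0)) ∧
    Module.finrank ℂ (DerSub (L4l c) (L4r c) 0 1 0) = 2 := by
  constructor
  · intro d
    rw [L4_isDer_iff]
    constructor
    · intro h
      exact ⟨(d (1, 0)).1, (d (0, 1)).1, Prod.ext rfl (h _), Prod.ext rfl (h _)⟩
    · rintro ⟨a, b, h1, h2⟩ ⟨x, y⟩
      have e : ((x, y) : ℂ × ℂ) = x • ((1 : ℂ), (0 : ℂ)) + y • ((0 : ℂ), (1 : ℂ)) := by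
        ext <;> simp
      rw [e, map_add, map_smul, map_smul, h1, h2]
      simp
  · let e : ((ℂ × ℂ) →ₗ[ℂ] ℂ) ≃ₗ[ℂ] DerSub (L4l c) (L4r c) 0 1 0 :=
      { toFun := fun f => ⟨(LinearMap.inl ℂ ℂ ℂ).comp f,
          (L4_isDer_iff c _).2 (fun p => by simp)⟩
        map_add' := fun f g => Subtype.ext (LinearMap.comp_add _ _ _)
        map_smul' := fun a f => Subtype.ext (LinearMap.comp_smul _ _ _)
        invFun := fun d => (LinearMap.fst ℂ ℂ ℂ).comp d.1
        left_inv := fun f => LinearMap.ext fun p => rfl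
        right_inv := fun d => Subtype.ext (LinearMap.ext fun p =>
          Prod.ext rfl ((L4_isDer_iff c d.1).1 d.2 p).symm) }
    rw [← e.finrank_eq, Module.finrank_linearMap]
    simp
end
end

section
/- Let a ∈ ℂ with a ≠ 0, and let L⁶₂(a) be the left-symmetric dialgebra on ℂ² with basis e₁, e₂ and products e₂ ⊣ e₂ = e₂, e₂ ⊢ e₁ = a·e₁, e₂ ⊢ e₂ = e₂ (all other basis products zero). Then a linear map d : ℂ² → ℂ² is a (1,0,1)-derivation of L⁶₂(a) if and only if its matrix in the basis (e₁,e₂) is diagonal, i.e., of the form [[d₁₁, 0],[0, d₂₂]] for some d₁₁, d₂₂ ∈ ℂ; in particular Der_{(1,0,1)}L⁶₂(a) has dimension 2. -/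
noncomputable section

/-- The left product `⊣` of the dialgebra, extended bilinearly from its values on the
basis `e₁ = (1,0)`, `e₂ = (0,1)` of `ℂ²`. -/
def L6l (a : ℂ) : (ℂ × ℂ) →ₗ[ℂ] (ℂ × ℂ) →ₗ[ℂ] (ℂ × ℂ) :=
  LinearMap.mk₂ ℂ (fun p q => ((0 : ℂ), p.2 * q.2))
    (by intros; ext <;> simp <;> ring)
    (by intros; ext <;> simp <;> ring)
    (by intros; ext <;> simp <;> ring)
    (by intros; ext <;> simp <;> ring)

/-- The right product `⊢` of the dialgebra, extended bilinearly from its values on the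
basis `e₁ = (1,0)`, `e₂ = (0,1)` of `ℂ²`. -/
def L6r (a : ℂ) : (ℂ × ℂ) →ₗ[ℂ] (ℂ × ℂ) →ₗ[ℂ] (ℂ × ℂ) :=
  LinearMap.mk₂ ℂ (fun p q => (a * p.2 * q.1, p.2 * q.2))
    (by intros; ext <;> simp <;> ring)
    (by intros; ext <;> simp <;> ring)
    (by intros; ext <;> simp <;> ring)
    (by intros; ext <;> simp <;> ring)

theorem L6_aux (a : ℂ) (d : (ℂ × ℂ) →ₗ[ℂ] (ℂ × ℂ)) :
    IsDer (L6l a) (L6r a) 1 0 1 d ↔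
      ∃ d₁₁ d₂₂ : ℂ, d ((1 : ℂ), (0 : ℂ)) = (d₁₁, 0) ∧ d ((0 : ℂ), (1 : ℂ)) = (0, d₂₂) := by
  constructor
  · intro h
    have h1 := h.1 (0, 1) (1, 0)
    have h2 := h.1 (0, 1) (0, 1)
    simp only [L6l, LinearMap.mk₂_apply, one_smul, zero_smul, zero_add, mul_one, one_mul,
      mul_zero] at h1 h2
    refine ⟨(d (1, 0)).1, (d (0, 1)).2, ?_, h2⟩
    have h3 : d ((0 : ℂ), (0 : ℂ)) = 0 := map_zero d
    rw [h3] at h1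
    exact Prod.ext rfl (congrArg Prod.snd h1).symm
  · rintro ⟨x, y, h1, h2⟩
    have key : ∀ p : ℂ × ℂ, d p = (x * p.1, y * p.2) := by
      intro p
      have hp : p = p.1 • ((1 : ℂ), (0 : ℂ)) + p.2 • ((0 : ℂ), (1 : ℂ)) := by
        ext <;> simp
      conv_lhs => rw [hp]
      rw [map_add, map_smul, map_smul, h1, h2]
      ext <;> simp [mul_comm]
    refine ⟨fun p q => ?_, fun p q => ?_⟩
    · simp only [key, L6l, LinearMap.mk₂_apply]
      ext <;> simp
      ring
    · simp only [key, L6r, LinearMap.mk₂_apply]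
      ext <;> simp <;> ring

/-- The diagonal parametrization of the derivation space. -/
def L6_equiv (a : ℂ) : DerSub (L6l a) (L6r a) 1 0 1 ≃ₗ[ℂ] (ℂ × ℂ) where
  toFun d := ((d.1 (1, 0)).1, (d.1 (0, 1)).2)
  map_add' _ _ := rfl
  map_smul' _ _ := rfl
  invFun v := ⟨LinearMap.prodMap (v.1 • LinearMap.id) (v.2 • LinearMap.id),
    (L6_aux a _).2 ⟨v.1, v.2, by simp, by simp⟩⟩
  left_inv := by
    rintro ⟨d, hd⟩
    obtain ⟨x, y, h1, h2⟩ := (L6_aux a d).1 hd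
    apply Subtype.ext
    ext <;> simp [h1, h2]
  right_inv v := by simp

theorem L6_der_one_zero_one (a : ℂ) (ha : a ≠ 0) :
    (∀ d : (ℂ × ℂ) →ₗ[ℂ] (ℂ × ℂ), IsDer (L6l a) (L6r a) 1 0 1 d ↔
      ∃ d₁₁ d₂₂ : ℂ, d ((1 : ℂ), (0 : ℂ)) = (d₁₁, 0) ∧ d ((0 : ℂ), (1 : ℂ)) = (0, d₂₂)) ∧
    Module.finrank ℂ (DerSub (L6l a) (L6r a) 1 0 1) = 2 := by
  refine ⟨L6_aux a, ?_⟩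
  rw [(L6_equiv a).finrank_eq]
  simp
end
end
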